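/- Let f ∈ L¹(ℝ²) satisfy ∫_{ℝ²} |f(y)| ln(2+|y|) dy < ∞ and ∫_{ℝ²} f dy = 0, and suppose f ∈ L^p_loc(ℝ²) for some p > 1. Then w(x) = -(1/2π)∫_{ℝ²} ln|x-y| f(y) dy defines a continuous function on ℝ² solving -Δw = f in the distributional sense, and w(x) → 0 as |x| → ∞ provided additionally ∫ |f(x)|^{p}(1+|x|)^{2βp+2(p-1)} dx < ∞ for some β > 0. -/

import Mathlib

open MeasureTheory Real Filter
noncomputable section
abbrev E2 : Type := EuclideanSpace ℝ (Fin 2)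
/-- Classical Laplacian on ℝ². -/
def lap (u : E2 → ℝ) (x : E2) : ℝ :=
  ∑ i : Fin 2, fderiv ℝ (fun y => fderiv ℝ u y (EuclideanSpace.single i 1)) x (EuclideanSpace.single i 1)
/-- The set of admissible exponents α in the definition of α_p(K). -/
def alphaSet (K : E2 → ℝ) (p : ℝ) : Set ℝ :=
  {α : ℝ | Integrable (fun x : E2 => |K x| ^ p * (1 + ‖x‖) ^ (2*α*p + 2*(p-1)))}
/-- α_p(K), with the convention sup ∅ = -∞ (⊥ in `EReal`). -/
def alphaP (K : E2 → ℝ) (p : ℝ) : EReal :=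
  sSup ((fun a : ℝ => (a : EReal)) '' alphaSet K p)

open scoped Topology ENNReal Convolution Pointwise RealInnerProductSpace

/-!
Split `log ‖z‖ = log⁺ ‖z‖ - log⁺ ‖z‖⁻¹`. The near kernel `log⁺ ‖z‖⁻¹` has compact support and lies
in every `L^q` with `q < ∞`, so by continuity of translations in `L^q` its convolution with a
locally `L^p` density is continuous, and it vanishes at infinity if the density is in `L^p`. The
far kernel `log⁺ ‖z‖` is Lipschitz, and for a density of zero mass it may be replaced by
`log⁺ ‖x - y‖ - log⁺ ‖x‖`, which tends to `0` as `x → ∞` and is dominated by `log⁺ ‖y‖ + log 2`.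

By Fubini the equation reduces to `Δ log ‖x‖ = 2π δ₀`, which is the limit `ε → 0` of the
integration by parts against `log √(‖x‖² + ε²)`, whose Laplacian is `2π` times an approximate
identity.
-/

section Convolution

variable {G : Type*} [NormedAddCommGroup G] [ProperSpace G] [MeasurableSpace G] [BorelSpace G]
  {μ : Measure G}
  {E F H : Type*} [NormedAddCommGroup E] [NormedSpace ℝ E] [NormedAddCommGroup F] [NormedSpace ℝ F]
  [NormedAddCommGroup H] [NormedSpace ℝ H]
  (L : E →L[ℝ] F →L[ℝ] H) {p q : ℝ≥0∞} {f : G → E} {g : G → F}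

lemma exists_memLp_eventually_eq_convolution_integrand
    (hf : ∀ s, IsCompact s → MemLp f p (μ.restrict s))
    (hcg : HasCompactSupport g) (x₀ : G) :
    ∃ f', MemLp f' p μ ∧ ∀ᶠ x in 𝓝 x₀, ∀ t, L (f t) (g (x - t)) = L (f' t) (g (x - t)) := by
  obtain ⟨K, hK, hKx₀⟩ := exists_compact_mem_nhds x₀
  have hcpt : IsCompact (K - tsupport g) := by
    simpa only [sub_eq_add_neg] using hK.add hcg.isCompact.neg
  refine ⟨(K - tsupport g).indicator f,
    (memLp_indicator_iff_restrict hcpt.measurableSet).2 (hf _ hcpt), ?_⟩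
  filter_upwards [hKx₀] with x hx t
  by_cases ht : x - t ∈ tsupport g
  · rw [Set.indicator_of_mem]
    exact ⟨x, hx, x - t, ht, sub_sub_cancel x t⟩
  · simp only [image_eq_zero_of_notMem_tsupport ht, map_zero]

variable [μ.IsAddHaarMeasure] [p.HolderConjugate q]

lemma convolutionExists_of_memLp (hf : MemLp f p μ) (hg : MemLp g q μ) :
    ConvolutionExists f g L μ := fun x =>
  memLp_one_iff_integrable.1 <| L.memLp_of_bilin 1 hf <|
    hg.comp_measurePreserving (Measure.measurePreserving_sub_left μ x)

lemma convolutionExists_of_memLp_restrict (hf : ∀ s, IsCompact s → MemLp f p (μ.restrict s))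
    (hg : MemLp g q μ) (hcg : HasCompactSupport g) : ConvolutionExists f g L μ := fun x => by
  obtain ⟨f', hf', heq⟩ := exists_memLp_eventually_eq_convolution_integrand L hf hcg x
  simpa only [ConvolutionExistsAt, heq.self_of_nhds] using convolutionExists_of_memLp L hf' hg x

variable [CompleteSpace H]

lemma convolution_eq_lpPairing [Fact (1 ≤ p)] [Fact (1 ≤ q)] (hf : MemLp f p μ)
    (hg : MemLp g q μ) (x : G) :
    (f ⋆[L, μ] g) x = L.lpPairing μ p q hf.toLp
      (Lp.compMeasurePreserving (x - ·) (Measure.measurePreserving_sub_left μ x) hg.toLp) := by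
  rw [ContinuousLinearMap.lpPairing_eq_integral, Lp.toLp_compMeasurePreserving, convolution_def]
  refine integral_congr_ae ?_
  filter_upwards [hf.coeFn_toLp, (hg.comp_measurePreserving
    (Measure.measurePreserving_sub_left μ x)).coeFn_toLp] with t hft hgt
  rw [hft, hgt, Function.comp_apply]

lemma continuous_convolution_of_memLp (hq : q ≠ ∞) (hf : MemLp f p μ) (hg : MemLp g q μ) :
    Continuous (f ⋆[L, μ] g) := by
  have : Fact (1 ≤ p) := ⟨ENNReal.HolderConjugate.one_le p q⟩
  have : Fact (1 ≤ q) := ⟨ENNReal.HolderConjugate.one_le q p⟩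
  have hsub : Continuous fun x : G => (⟨(x - ·), continuous_sub_left x⟩ : C(G, G)) :=
    ContinuousMap.continuous_of_continuous_uncurry _ continuous_sub
  rw [funext (convolution_eq_lpPairing L hf hg)]
  exact (L.lpPairing μ p q hf.toLp).continuous.comp <|
    continuous_const.compMeasurePreservingLp hsub (Measure.measurePreserving_sub_left μ) hq

lemma norm_convolution_le_of_memLp [Fact (1 ≤ p)] [Fact (1 ≤ q)] (hf : MemLp f p μ)
    (hg : MemLp g q μ) (x : G) :
    ‖(f ⋆[L, μ] g) x‖ ≤
      ‖L.lpPairing μ p q‖ * (eLpNorm f p μ).toReal * (eLpNorm g q μ).toReal := by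
  rw [convolution_eq_lpPairing L hf hg, ← Lp.norm_toLp f hf, ← Lp.norm_toLp g hg,
    ← Lp.norm_compMeasurePreserving hg.toLp (Measure.measurePreserving_sub_left μ x)]
  exact (L.lpPairing μ p q).le_opNorm₂ _ _

lemma tendsto_convolution_cocompact_of_memLp (hp : p ≠ ∞) (hf : MemLp f p μ) (hg : MemLp g q μ)
    (hcg : HasCompactSupport g) : Tendsto (f ⋆[L, μ] g) (cocompact G) (𝓝 0) := by
  have : Fact (1 ≤ p) := ⟨ENNReal.HolderConjugate.one_le p q⟩
  have : Fact (1 ≤ q) := ⟨ENNReal.HolderConjugate.one_le q p⟩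
  refine Metric.tendsto_nhds.2 fun ε hε => ?_
  obtain ⟨δ, hδ, hδε⟩ : ∃ δ > 0,
      ‖L.lpPairing μ p q‖ * δ * (eLpNorm g q μ).toReal < ε := by
    have hlim : Tendsto (fun δ : ℝ => ‖L.lpPairing μ p q‖ * δ * (eLpNorm g q μ).toReal)
        (𝓝[>] 0) (𝓝 0) :=
      (Continuous.tendsto' (by fun_prop) 0 0 (by simp)).mono_left nhdsWithin_le_nhds
    exact (eventually_mem_nhdsWithin.and (hlim.eventually_lt_const hε)).exists
  obtain ⟨f', hcf', hff', -, hf'⟩ :=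
    hf.exists_hasCompactSupport_eLpNorm_sub_le hp (ENNReal.ofReal_pos.2 hδ).ne'
  filter_upwards [(hcf'.convolution L hcg).isCompact.compl_mem_cocompact] with x hx
  have hzero : (f' ⋆[L, μ] g) x = 0 := image_eq_zero_of_notMem_tsupport hx
  have hsplit : (f ⋆[L, μ] g) x = ((f - f') ⋆[L, μ] g) x := by
    rw [← add_zero (((f - f') ⋆[L, μ] g) x), ← hzero,
      ← (convolutionExists_of_memLp L (hf.sub hf') hg x).add_distrib
        (convolutionExists_of_memLp L hf' hg x), sub_add_cancel]
  rw [dist_zero_right, hsplit]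
  refine (norm_convolution_le_of_memLp L (hf.sub hf') hg x).trans_lt (lt_of_le_of_lt ?_ hδε)
  gcongr
  exact ENNReal.toReal_le_of_le_ofReal hδ.le hff'

lemma continuous_convolution_of_memLp_restrict (hq : q ≠ ∞)
    (hf : ∀ s, IsCompact s → MemLp f p (μ.restrict s)) (hg : MemLp g q μ)
    (hcg : HasCompactSupport g) : Continuous (f ⋆[L, μ] g) := by
  refine continuous_iff_continuousAt.2 fun x₀ => ?_
  obtain ⟨f', hf', heq⟩ := exists_memLp_eventually_eq_convolution_integrand L hf hcg x₀
  refine (continuous_convolution_of_memLp L hq hf' hg).continuousAt.congr ?_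
  filter_upwards [heq] with x hx
  simp only [convolution_def, hx]

end Convolution

section PosLog

lemma posLog_le_rpow_div {x ε : ℝ} (hx : 0 ≤ x) (hε : 0 < ε) : log⁺ x ≤ x ^ ε / ε :=
  max_le (by positivity) (log_le_rpow_div hx hε)

lemma posLog_inv_eq_zero {x : ℝ} (hx : 1 ≤ |x|) : log⁺ x⁻¹ = 0 := by
  rw [posLog_eq_zero_iff, abs_inv]
  exact inv_le_one_of_one_le₀ hx

lemma posLog_sub_posLog_le {a b : ℝ} (ha : 0 ≤ a) (hb : 0 ≤ b) :
    log⁺ a - log⁺ b ≤ |a - b| / max 1 b := by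
  have hb' : 0 < max 1 b := by positivity
  rw [posLog_eq_log_max_one ha, posLog_eq_log_max_one hb, ← log_div (by positivity) hb'.ne']
  calc log (max 1 a / max 1 b) ≤ max 1 a / max 1 b - 1 := log_le_sub_one_of_pos (by positivity)
    _ = (max 1 a - max 1 b) / max 1 b := by rw [sub_div, div_self hb'.ne']
    _ ≤ |a - b| / max 1 b := by
        gcongr
        exact (le_abs_self _).trans (by simpa using abs_max_sub_max_le_max 1 a 1 b)

variable {E : Type*} [SeminormedAddCommGroup E]

lemma posLog_norm_sub_le (x y : E) : log⁺ ‖x - y‖ ≤ log⁺ ‖x‖ + log⁺ ‖y‖ + log 2 := by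
  simpa only [sub_eq_add_neg, norm_neg] using posLog_norm_add_le x (-y)

lemma abs_posLog_norm_sub_sub_posLog_norm_le (x y : E) :
    |log⁺ ‖x - y‖ - log⁺ ‖x‖| ≤ log⁺ ‖y‖ + log 2 := by
  have hle : log⁺ ‖x‖ ≤ log⁺ ‖x - y‖ + log⁺ ‖y‖ + log 2 := by
    simpa only [sub_add_cancel] using posLog_norm_add_le (x - y) y
  rw [abs_sub_le_iff]
  constructor <;> linarith [posLog_norm_sub_le x y]

lemma posLog_norm_sub_posLog_norm_le (u v : E) :
    log⁺ ‖u‖ - log⁺ ‖v‖ ≤ ‖u - v‖ / max 1 ‖v‖ :=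
  (posLog_sub_posLog_le (norm_nonneg u) (norm_nonneg v)).trans <| by
    gcongr
    exact abs_norm_sub_norm_le u v

lemma lipschitzWith_posLog_norm : LipschitzWith 1 fun x : E => log⁺ ‖x‖ :=
  .of_le_add fun x y => by
    rw [← sub_le_iff_le_add', dist_eq_norm]
    exact (posLog_norm_sub_posLog_norm_le x y).trans (div_le_self (norm_nonneg _) (le_max_left _ _))

lemma tendsto_posLog_norm_sub_sub_posLog_norm (y : E) :
    Tendsto (fun x : E => log⁺ ‖x - y‖ - log⁺ ‖x‖) (Bornology.cobounded E) (𝓝 0) := by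
  have hmax : Tendsto (fun x : E => max 1 ‖x‖) (Bornology.cobounded E) atTop :=
    tendsto_atTop_mono (fun _ => le_max_right _ _) tendsto_norm_cobounded_atTop
  have hdiv : Tendsto (fun x : E => ‖y‖ / max 1 ‖x‖) (Bornology.cobounded E) (𝓝 0) :=
    hmax.const_div_atTop _
  have hdiv_sub : Tendsto (fun x : E => -(‖y‖ / max 1 ‖x - y‖)) (Bornology.cobounded E) (𝓝 0) := by
    simpa using (hdiv.comp (tendsto_sub_const_cobounded y)).neg
  refine tendsto_of_tendsto_of_tendsto_of_le_of_le hdiv_sub hdiv (fun x => ?_) fun x => ?_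
  · have := posLog_norm_sub_posLog_norm_le x (x - y)
    rw [sub_sub_cancel] at this
    simp only
    linarith
  · simpa using posLog_norm_sub_posLog_norm_le (x - y) x

end PosLog

section LogSingularity

variable {E : Type*} [NormedAddCommGroup E]

lemma hasCompactSupport_posLog_norm_inv [ProperSpace E] :
    HasCompactSupport fun z : E => log⁺ ‖z‖⁻¹ :=
  .intro (isCompact_closedBall 0 1) fun z hz => posLog_inv_eq_zero <| by
    rw [mem_closedBall_zero_iff, not_le] at hz
    rw [abs_norm]
    exact hz.le

lemma measurable_posLog_norm_inv [MeasurableSpace E] [OpensMeasurableSpace E] :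
    Measurable fun z : E => log⁺ ‖z‖⁻¹ :=
  continuous_posLog.measurable.comp measurable_norm.inv

lemma rpow_posLog_inv_le {q r : ℝ} (hq : 0 < q) (hr : 0 ≤ r) :
    log⁺ r⁻¹ ^ q ≤ (2 * q) ^ q * r ^ (-(1 / 2) : ℝ) := by
  calc log⁺ r⁻¹ ^ q ≤ (r⁻¹ ^ (1 / (2 * q)) / (1 / (2 * q))) ^ q :=
        rpow_le_rpow posLog_nonneg (posLog_le_rpow_div (by positivity) (by positivity)) hq.le
    _ = (2 * q) ^ q * r ^ (-(1 / 2) : ℝ) := by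
        rw [div_div_eq_mul_div, div_one, mul_comm, mul_rpow (by positivity) (by positivity),
          ← rpow_mul (by positivity), inv_rpow hr, ← rpow_neg hr]
        congr 3
        field_simp

lemma integrableOn_Ioi_pow_mul_posLog_inv_rpow (n : ℕ) {q : ℝ} (hq : 0 < q) :
    IntegrableOn (fun r : ℝ => r ^ n * log⁺ r⁻¹ ^ q) (Set.Ioi 0) := by
  have hmeas : Measurable fun r : ℝ => r ^ n * log⁺ r⁻¹ ^ q := by fun_prop
  rw [← Set.Ioc_union_Ioi_eq_Ioi zero_le_one, integrableOn_union]
  constructor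
  · have hint : IntegrableOn (fun r : ℝ => (2 * q) ^ q * r ^ (-(1 / 2) : ℝ)) (Set.Ioc 0 1) :=
      ((intervalIntegrable_iff_integrableOn_Ioc_of_le zero_le_one).1
        (intervalIntegral.intervalIntegrable_rpow' (by norm_num))).const_mul _
    refine hint.mono' hmeas.aestronglyMeasurable ?_
    filter_upwards [ae_restrict_mem measurableSet_Ioc] with r ⟨hr0, hr1⟩
    have hnonneg : 0 ≤ log⁺ r⁻¹ ^ q := rpow_nonneg posLog_nonneg q
    rw [norm_of_nonneg (by positivity)]
    exact (mul_le_of_le_one_left hnonneg (pow_le_one₀ hr0.le hr1)).trans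
      (rpow_posLog_inv_le hq hr0.le)
  · refine integrableOn_zero.congr_fun (fun r (hr : 1 < r) => ?_) measurableSet_Ioi
    rw [posLog_inv_eq_zero (hr.le.trans (le_abs_self r)), zero_rpow hq.ne', mul_zero]

variable [NormedSpace ℝ E] [FiniteDimensional ℝ E] [Nontrivial E] [MeasurableSpace E] [BorelSpace E]
  (μ : Measure E) [μ.IsAddHaarMeasure]

lemma memLp_posLog_norm_inv {q : ℝ≥0∞} (hq : q ≠ ∞) : MemLp (fun z : E => log⁺ ‖z‖⁻¹) q μ := by
  have hmeas := (measurable_posLog_norm_inv (E := E)).aestronglyMeasurable (μ := μ)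
  rcases eq_or_ne q 0 with rfl | hq₀
  · exact memLp_zero_iff_aestronglyMeasurable.2 hmeas
  · rw [← integrable_norm_rpow_iff hmeas hq₀ hq]
    simp only [norm_of_nonneg posLog_nonneg]
    exact (integrable_fun_norm_addHaar μ (f := fun r => log⁺ r⁻¹ ^ q.toReal)).2
      (integrableOn_Ioi_pow_mul_posLog_inv_rpow _ (ENNReal.toReal_pos hq₀ hq))

lemma integrable_posLog_norm_inv : Integrable (fun z : E => log⁺ ‖z‖⁻¹) μ :=
  memLp_one_iff_integrable.1 (memLp_posLog_norm_inv μ ENNReal.one_ne_top)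

lemma locallyIntegrable_log_norm : LocallyIntegrable (fun z : E => log ‖z‖) μ := by
  simp only [← posLog_sub_posLog_inv]
  exact (lipschitzWith_posLog_norm (E := E)).continuous.locallyIntegrable.sub
    (integrable_posLog_norm_inv μ).locallyIntegrable

end LogSingularity

section FarPart

variable {E : Type*} [NormedAddCommGroup E]

lemma norm_posLog_norm_sub_sub_mul_le (x y : E) (c : ℝ) :
    ‖(log⁺ ‖x - y‖ - log⁺ ‖x‖) * c‖ ≤ ‖log⁺ ‖y‖ * c‖ + log 2 * ‖c‖ :=
  calc ‖(log⁺ ‖x - y‖ - log⁺ ‖x‖) * c‖ ≤ (log⁺ ‖y‖ + log 2) * ‖c‖ := by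
        rw [norm_mul]
        gcongr
        exact abs_posLog_norm_sub_sub_posLog_norm_le x y
    _ = ‖log⁺ ‖y‖ * c‖ + log 2 * ‖c‖ := by
        rw [add_mul, norm_mul, norm_of_nonneg posLog_nonneg]

variable [MeasurableSpace E] [OpensMeasurableSpace E] {μ : Measure E} {f : E → ℝ}

lemma integrable_posLog_norm_sub_sub_mul (hf : Integrable f μ)
    (hlog : Integrable (fun y => log⁺ ‖y‖ * f y) μ) (x : E) :
    Integrable (fun y => (log⁺ ‖x - y‖ - log⁺ ‖x‖) * f y) μ :=
  (hlog.norm.add (hf.norm.const_mul (log 2))).mono'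
    (Continuous.aestronglyMeasurable (by fun_prop) |>.mul hf.1)
    (ae_of_all _ fun y => norm_posLog_norm_sub_sub_mul_le x y (f y))

lemma integrable_posLog_norm_sub_mul (hf : Integrable f μ)
    (hlog : Integrable (fun y => log⁺ ‖y‖ * f y) μ) (x : E) :
    Integrable (fun y => log⁺ ‖x - y‖ * f y) μ := by
  refine ((integrable_posLog_norm_sub_sub_mul hf hlog x).add (hf.const_mul (log⁺ ‖x‖))).congr
    (ae_of_all _ fun y => ?_)
  simp only [Pi.add_apply]
  ring

lemma lipschitzWith_integral_posLog_norm_sub_mul (hf : Integrable f μ)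
    (hlog : Integrable (fun y => log⁺ ‖y‖ * f y) μ) :
    LipschitzWith (∫ y, ‖f y‖ ∂μ).toNNReal fun x => ∫ y, log⁺ ‖x - y‖ * f y ∂μ :=
  .of_dist_le' fun x x' => by
    rw [dist_eq_norm, ← integral_sub (integrable_posLog_norm_sub_mul hf hlog x)
      (integrable_posLog_norm_sub_mul hf hlog x'), ← integral_mul_const]
    refine norm_integral_le_of_norm_le (hf.norm.mul_const _) (ae_of_all _ fun y => ?_)
    rw [← sub_mul, norm_mul, mul_comm]
    gcongr
    simpa [dist_eq_norm] using lipschitzWith_posLog_norm.dist_le_mul (x - y) (x' - y)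

lemma tendsto_integral_posLog_norm_sub_mul_cobounded (hf : Integrable f μ)
    (hlog : Integrable (fun y => log⁺ ‖y‖ * f y) μ) (hzero : ∫ y, f y ∂μ = 0) :
    Tendsto (fun x => ∫ y, log⁺ ‖x - y‖ * f y ∂μ) (Bornology.cobounded E) (𝓝 0) := by
  have hsub (x : E) : ∫ y, log⁺ ‖x - y‖ * f y ∂μ = ∫ y, (log⁺ ‖x - y‖ - log⁺ ‖x‖) * f y ∂μ := by
    simp only [sub_mul]
    rw [integral_sub (integrable_posLog_norm_sub_mul hf hlog x) (hf.const_mul _),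
      integral_const_mul, hzero, mul_zero, sub_zero]
  have : (Bornology.cobounded E).IsCountablyGenerated := by
    rw [← comap_norm_atTop]
    infer_instance
  rw [funext hsub, ← integral_zero E ℝ (μ := μ)]
  exact tendsto_integral_filter_of_dominated_convergence
    (fun y => ‖log⁺ ‖y‖ * f y‖ + log 2 * ‖f y‖)
    (.of_forall fun x => (integrable_posLog_norm_sub_sub_mul hf hlog x).1)
    (.of_forall fun x => ae_of_all _ fun y => norm_posLog_norm_sub_sub_mul_le x y (f y))
    (hlog.norm.add (hf.norm.const_mul (log 2)))
    (ae_of_all _ fun y => by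
      simpa using (tendsto_posLog_norm_sub_sub_posLog_norm y).mul_const (f y))

end FarPart

section LogPotential

variable {E : Type*} [NormedAddCommGroup E] [MeasurableSpace E]

/-- The logarithmic potential `x ↦ ∫ log ‖x - y‖ f(y) dμ(y)` of a density `f`, without the
normalising constant `-1 / 2π` of the plane. -/
def logPotential (μ : Measure E) (f : E → ℝ) (x : E) : ℝ :=
  ∫ y, log ‖x - y‖ * f y ∂μ

variable [NormedSpace ℝ E] [FiniteDimensional ℝ E] [BorelSpace E] {μ : Measure E}
  [μ.IsAddHaarMeasure] {f g : E → ℝ} {p : ℝ≥0∞}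

lemma integrable_prod_posLog_norm_sub_mul_mul (hf : Integrable f μ)
    (hlog : Integrable (fun y => log⁺ ‖y‖ * f y) μ) (hg : Continuous g)
    (hcg : HasCompactSupport g) :
    Integrable (fun z : E × E => log⁺ ‖z.1 - z.2‖ * f z.2 * g z.1) (μ.prod μ) := by
  have hg_int : Integrable g μ := hg.integrable_of_hasCompactSupport hcg
  have hg_log : Integrable (fun x => log⁺ ‖x‖ * g x) μ :=
    Continuous.integrable_of_hasCompactSupport (by fun_prop) hcg.mul_left
  have hbound := ((hg_log.norm.mul_prod hf.norm).add (hg_int.norm.mul_prod hlog.norm)).add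
    ((hg_int.norm.mul_prod hf.norm).const_mul (log 2))
  refine hbound.mono' ?_ (ae_of_all _ fun ⟨x, y⟩ => ?_)
  · exact ((Continuous.aestronglyMeasurable (by fun_prop)).mul hf.1.comp_snd).mul
      hg_int.1.comp_fst
  · simp only [Pi.add_apply, norm_mul, norm_of_nonneg posLog_nonneg]
    calc log⁺ ‖x - y‖ * ‖f y‖ * ‖g x‖
        ≤ (log⁺ ‖x‖ + log⁺ ‖y‖ + log 2) * ‖f y‖ * ‖g x‖ := by
          gcongr
          exact posLog_norm_sub_le x y
      _ = _ := by ring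

variable [Nontrivial E]

lemma logPotential_eq_sub (hf : Integrable f μ) (hlog : Integrable (fun y => log⁺ ‖y‖ * f y) μ)
    (hp : 1 < p) (hloc : ∀ s, IsCompact s → MemLp f p (μ.restrict s)) :
    logPotential μ f = (fun x => ∫ y, log⁺ ‖x - y‖ * f y ∂μ) -
      f ⋆[.mul ℝ ℝ, μ] fun z => log⁺ ‖z‖⁻¹ := by
  have := ENNReal.HolderConjugate.conjExponent hp.le
  have hq : p.conjExponent ≠ ∞ := (ENNReal.HolderConjugate.ne_top_iff_ne_one _ p).2 hp.ne'
  have hnear := convolutionExists_of_memLp_restrict (.mul ℝ ℝ) hloc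
    (memLp_posLog_norm_inv μ hq) hasCompactSupport_posLog_norm_inv
  funext x
  rw [Pi.sub_apply, convolution_def,
    ← integral_sub (integrable_posLog_norm_sub_mul hf hlog x) (hnear x)]
  refine integral_congr_ae (ae_of_all _ fun y => ?_)
  simp only [ContinuousLinearMap.mul_apply']
  rw [← posLog_sub_posLog_inv]
  ring

theorem continuous_logPotential (hf : Integrable f μ)
    (hlog : Integrable (fun y => log⁺ ‖y‖ * f y) μ) (hp : 1 < p)
    (hloc : ∀ s, IsCompact s → MemLp f p (μ.restrict s)) : Continuous (logPotential μ f) := by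
  have := ENNReal.HolderConjugate.conjExponent hp.le
  have hq : p.conjExponent ≠ ∞ := (ENNReal.HolderConjugate.ne_top_iff_ne_one _ p).2 hp.ne'
  rw [logPotential_eq_sub hf hlog hp hloc]
  exact (lipschitzWith_integral_posLog_norm_sub_mul hf hlog).continuous.sub <|
    continuous_convolution_of_memLp_restrict _ hq hloc (memLp_posLog_norm_inv μ hq)
      hasCompactSupport_posLog_norm_inv

theorem tendsto_logPotential_cocompact (hf : Integrable f μ)
    (hlog : Integrable (fun y => log⁺ ‖y‖ * f y) μ) (hzero : ∫ y, f y ∂μ = 0)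
    (hp : 1 < p) (hp_top : p ≠ ∞) (hfp : MemLp f p μ) :
    Tendsto (logPotential μ f) (cocompact E) (𝓝 0) := by
  have := ENNReal.HolderConjugate.conjExponent hp.le
  have hq : p.conjExponent ≠ ∞ := (ENNReal.HolderConjugate.ne_top_iff_ne_one _ p).2 hp.ne'
  have hfar := tendsto_integral_posLog_norm_sub_mul_cobounded hf hlog hzero
  rw [Metric.cobounded_eq_cocompact] at hfar
  rw [logPotential_eq_sub hf hlog hp fun s _ => hfp.restrict s, ← sub_zero (0 : ℝ)]
  exact hfar.sub <| tendsto_convolution_cocompact_of_memLp _ hp_top hfp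
    (memLp_posLog_norm_inv μ hq) hasCompactSupport_posLog_norm_inv

lemma integrable_prod_posLog_norm_sub_inv_mul_mul (hf : Integrable f μ) (hg : Continuous g)
    (hcg : HasCompactSupport g) :
    Integrable (fun z : E × E => log⁺ ‖z.1 - z.2‖⁻¹ * f z.2 * g z.1) (μ.prod μ) := by
  obtain ⟨C, hC⟩ := hg.bounded_above_of_compact_support hcg
  have hconv := hf.convolution_integrand (.mul ℝ ℝ) (integrable_posLog_norm_inv μ)
  refine (hconv.mul_bdd (hg.comp continuous_fst).aestronglyMeasurable
    (ae_of_all _ fun z => hC z.1)).congr (ae_of_all _ fun z => ?_)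
  simp only [ContinuousLinearMap.mul_apply', Function.comp_apply, mul_comm (f _)]

lemma integrable_prod_log_norm_sub_mul_mul (hf : Integrable f μ)
    (hlog : Integrable (fun y => log⁺ ‖y‖ * f y) μ) (hg : Continuous g)
    (hcg : HasCompactSupport g) :
    Integrable (fun z : E × E => log ‖z.1 - z.2‖ * f z.2 * g z.1) (μ.prod μ) := by
  simp only [← posLog_sub_posLog_inv, sub_mul]
  exact (integrable_prod_posLog_norm_sub_mul_mul hf hlog hg hcg).sub
    (integrable_prod_posLog_norm_sub_inv_mul_mul hf hg hcg)

lemma integral_logPotential_mul (hf : Integrable f μ)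
    (hlog : Integrable (fun y => log⁺ ‖y‖ * f y) μ) (hg : Continuous g)
    (hcg : HasCompactSupport g) :
    ∫ x, logPotential μ f x * g x ∂μ = ∫ y, f y * ∫ x, log ‖x - y‖ * g x ∂μ ∂μ := by
  simp only [logPotential, ← integral_mul_const, ← integral_const_mul]
  rw [integral_integral_swap (integrable_prod_log_norm_sub_mul_mul hf hlog hg hcg)]
  simp only [mul_left_comm (f _), mul_assoc]

end LogPotential

section IntegrationByParts

variable {E : Type*} [NormedAddCommGroup E] [NormedSpace ℝ E] {u ψ : E → ℝ}

lemma contDiff_one_fderiv_apply (hu : ContDiff ℝ 2 u) (v : E) :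
    ContDiff ℝ 1 fun x => fderiv ℝ u x v :=
  (hu.fderiv_right (by norm_num)).clm_apply contDiff_const

lemma continuous_fderiv_apply_const (hu : ContDiff ℝ 1 u) (v : E) :
    Continuous fun x => fderiv ℝ u x v :=
  (hu.continuous_fderiv one_ne_zero).clm_apply continuous_const

variable [FiniteDimensional ℝ E] [MeasurableSpace E] [BorelSpace E] {μ : Measure E}
  [μ.IsAddHaarMeasure]

lemma integral_mul_fderiv_eq_neg_of_hasCompactSupport (hu : ContDiff ℝ 1 u) (hψ : ContDiff ℝ 1 ψ)
    (hcψ : HasCompactSupport ψ) (v : E) :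
    ∫ x, u x * fderiv ℝ ψ x v ∂μ = -∫ x, fderiv ℝ u x v * ψ x ∂μ :=
  integral_mul_fderiv_eq_neg_fderiv_mul_of_integrable
    (((continuous_fderiv_apply_const hu v).mul hψ.continuous).integrable_of_hasCompactSupport
      hcψ.mul_left)
    ((hu.continuous.mul (continuous_fderiv_apply_const hψ v)).integrable_of_hasCompactSupport
      (hcψ.fderiv_apply ℝ v).mul_left)
    ((hu.continuous.mul hψ.continuous).integrable_of_hasCompactSupport hcψ.mul_left)
    (fun x _ => hu.differentiable one_ne_zero x) (fun x _ => hψ.differentiable one_ne_zero x)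

lemma integral_mul_fderiv_fderiv_of_hasCompactSupport (hu : ContDiff ℝ 2 u)
    (hψ : ContDiff ℝ 2 ψ) (hcψ : HasCompactSupport ψ) (v : E) :
    ∫ x, u x * fderiv ℝ (fun y => fderiv ℝ ψ y v) x v ∂μ =
      ∫ x, fderiv ℝ (fun y => fderiv ℝ u y v) x v * ψ x ∂μ := by
  rw [integral_mul_fderiv_eq_neg_of_hasCompactSupport (hu.of_le one_le_two)
      (contDiff_one_fderiv_apply hψ v) (hcψ.fderiv_apply ℝ v),
    integral_mul_fderiv_eq_neg_of_hasCompactSupport (contDiff_one_fderiv_apply hu v)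
      (hψ.of_le one_le_two) hcψ, neg_neg]

end IntegrationByParts

section Laplacian

variable {u ψ : E2 → ℝ}

lemma continuous_lap (hu : ContDiff ℝ 2 u) : Continuous (lap u) :=
  continuous_finsetSum _ fun _ _ =>
    continuous_fderiv_apply_const (contDiff_one_fderiv_apply hu _) _

lemma hasCompactSupport_lap (hcu : HasCompactSupport u) : HasCompactSupport (lap u) := by
  have hsum : lap u = ∑ i : Fin 2, fun x => fderiv ℝ
      (fun y => fderiv ℝ u y (EuclideanSpace.single i 1)) x (EuclideanSpace.single i 1) := by
    ext x
    rw [Finset.sum_apply, lap]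
  rw [hsum, Fin.sum_univ_two]
  exact ((hcu.fderiv_apply ℝ _).fderiv_apply ℝ _).add ((hcu.fderiv_apply ℝ _).fderiv_apply ℝ _)

lemma lap_comp_add_right (u : E2 → ℝ) (a x : E2) : lap (fun z => u (z + a)) x = lap u (x + a) := by
  refine Finset.sum_congr rfl fun i _ => ?_
  simp only [fderiv_comp_add_right]
  rw [fderiv_comp_add_right (f := fun z => fderiv ℝ u z (EuclideanSpace.single i 1))]

lemma integral_mul_lap (hu : ContDiff ℝ 2 u) (hψ : ContDiff ℝ 2 ψ) (hcψ : HasCompactSupport ψ) :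
    ∫ x, u x * lap ψ x = ∫ x, lap u x * ψ x := by
  simp only [lap, Finset.mul_sum, Finset.sum_mul]
  rw [integral_finsetSum, integral_finsetSum]
  · exact Finset.sum_congr rfl fun i _ =>
      integral_mul_fderiv_fderiv_of_hasCompactSupport hu hψ hcψ _
  · exact fun i _ => ((continuous_fderiv_apply_const (contDiff_one_fderiv_apply hu _) _).mul
      hψ.continuous).integrable_of_hasCompactSupport hcψ.mul_left
  · exact fun i _ => (hu.continuous.mul (continuous_fderiv_apply_const
      (contDiff_one_fderiv_apply hψ _) _)).integrable_of_hasCompactSupport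
        ((hcψ.fderiv_apply ℝ _).fderiv_apply ℝ _).mul_left

end Laplacian

section RegularisedLogarithm

variable {E : Type*} [NormedAddCommGroup E] {ε : ℝ}

/-- The smooth approximation `log √(‖x‖² + ε²)` of `log ‖x‖`. -/
def regLog (ε : ℝ) (x : E) : ℝ :=
  log (‖x‖ ^ 2 + ε ^ 2) / 2

lemma tendsto_regLog {x : E} (hx : x ≠ 0) :
    Tendsto (fun ε => regLog ε x) (𝓝[>] 0) (𝓝 (log ‖x‖)) := by
  have hcont : ContinuousAt (fun ε => regLog ε x) 0 := by
    have : ‖x‖ ^ 2 + (0 : ℝ) ^ 2 ≠ 0 := by positivity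
    unfold regLog
    fun_prop (disch := assumption)
  have hval : regLog 0 x = log ‖x‖ := by simp [regLog]
  exact hval ▸ hcont.tendsto.mono_left nhdsWithin_le_nhds

lemma abs_regLog_le {x : E} (hx : x ≠ 0) (hε : ε ∈ Set.Ioc 0 1) :
    |regLog ε x| ≤ |log ‖x‖| + |regLog 1 x| := by
  have : 0 < ‖x‖ := norm_pos_iff.2 hx
  have hlog : log ‖x‖ = log (‖x‖ ^ 2) / 2 := by simp
  have hlower : log ‖x‖ ≤ regLog ε x := by
    rw [hlog, regLog]
    gcongr
    exact le_add_of_nonneg_right (sq_nonneg ε)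
  have hupper : regLog ε x ≤ regLog 1 x := by
    have := hε.1
    unfold regLog
    gcongr
    exact hε.2
  exact (abs_le_max_abs_abs hlower hupper).trans
    (max_le_add_of_nonneg (abs_nonneg _) (abs_nonneg _))

variable [InnerProductSpace ℝ E]

lemma contDiff_regLog (hε : ε ≠ 0) {n : WithTop ℕ∞} : ContDiff ℝ n (regLog ε : E → ℝ) :=
  (((contDiff_norm_sq ℝ).add contDiff_const).log fun x => by positivity).div_const 2

lemma fderiv_regLog_apply (hε : ε ≠ 0) (x v : E) :
    fderiv ℝ (regLog ε) x v = ⟪x, v⟫ / (‖x‖ ^ 2 + ε ^ 2) := by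
  have hpos : ‖x‖ ^ 2 + ε ^ 2 ≠ 0 := by positivity
  have hderiv := (((hasStrictFDerivAt_norm_sq x).hasFDerivAt.add_const (ε ^ 2)).log hpos).mul_const
    (2⁻¹ : ℝ)
  have : regLog ε = fun x : E => log (‖x‖ ^ 2 + ε ^ 2) * 2⁻¹ := by
    ext; rw [regLog, div_eq_mul_inv]
  rw [this, hderiv.fderiv]
  simp only [smul_apply, coe_innerSL_apply, nsmul_eq_mul, Nat.cast_ofNat, smul_eq_mul]
  field_simp

lemma fderiv_fderiv_regLog_apply (hε : ε ≠ 0) (x v : E) :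
    fderiv ℝ (fun y => fderiv ℝ (regLog ε) y v) x v =
      ‖v‖ ^ 2 / (‖x‖ ^ 2 + ε ^ 2) - 2 * ⟪x, v⟫ ^ 2 / (‖x‖ ^ 2 + ε ^ 2) ^ 2 := by
  have hpos : ‖x‖ ^ 2 + ε ^ 2 ≠ 0 := by positivity
  have hinner : HasFDerivAt (fun y : E => ⟪y, v⟫) (innerSL ℝ v) x :=
    (innerSL ℝ v).hasFDerivAt.congr_of_eventuallyEq (.of_forall fun y => real_inner_comm v y)
  have hinv := (hasDerivAt_inv hpos).comp_hasFDerivAt x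
    ((hasStrictFDerivAt_norm_sq x).hasFDerivAt.add_const (ε ^ 2))
  have hderiv : HasFDerivAt (fun y : E => ⟪y, v⟫ * (‖y‖ ^ 2 + ε ^ 2)⁻¹) _ x := hinner.fun_mul hinv
  simp only [fderiv_regLog_apply hε, div_eq_mul_inv]
  rw [hderiv.fderiv]
  simp only [neg_smul, smul_neg, add_apply, neg_apply, smul_apply, coe_innerSL_apply,
    nsmul_eq_mul, Nat.cast_ofNat, smul_eq_mul, real_inner_self_eq_norm_sq]
  field_simp
  ring

lemma tendsto_integral_regLog_mul [FiniteDimensional ℝ E] [Nontrivial E] [MeasurableSpace E]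
    [BorelSpace E] {μ : Measure E} [μ.IsAddHaarMeasure] {ψ : E → ℝ} (hψ : Continuous ψ)
    (hcψ : HasCompactSupport ψ) :
    Tendsto (fun ε => ∫ x, regLog ε x * ψ x ∂μ) (𝓝[>] 0) (𝓝 (∫ x, log ‖x‖ * ψ x ∂μ)) := by
  have hregLog {ε : ℝ} (hε : ε ≠ 0) : Continuous (regLog ε : E → ℝ) :=
    (contDiff_regLog hε (n := 0)).continuous
  have hlog_int : Integrable (fun x : E => ψ x * log ‖x‖) μ :=
    (locallyIntegrable_log_norm μ).integrable_smul_left_of_hasCompactSupport hψ hcψ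
  have hreg_int : Integrable (fun x : E => ψ x * regLog 1 x) μ :=
    (hψ.mul (hregLog one_ne_zero)).integrable_of_hasCompactSupport hcψ.mul_right
  have hne : ∀ᵐ x ∂μ, x ≠ 0 := Measure.ae_ne μ 0
  refine tendsto_integral_filter_of_dominated_convergence
    (fun x => ‖ψ x * log ‖x‖‖ + ‖ψ x * regLog 1 x‖) ?_ ?_ (hlog_int.norm.add hreg_int.norm) ?_
  · filter_upwards [self_mem_nhdsWithin] with ε hε
    exact ((hregLog (Set.mem_Ioi.1 hε).ne').mul hψ).aestronglyMeasurable
  · filter_upwards [Ioc_mem_nhdsGT one_pos] with ε hε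
    filter_upwards [hne] with x hx
    calc ‖regLog ε x * ψ x‖ = ‖ψ x‖ * |regLog ε x| := by
          rw [norm_mul, mul_comm, norm_eq_abs (regLog ε x)]
      _ ≤ ‖ψ x‖ * (|log ‖x‖| + |regLog 1 x|) := by
          gcongr
          exact abs_regLog_le hx hε
      _ = ‖ψ x * log ‖x‖‖ + ‖ψ x * regLog 1 x‖ := by
          rw [mul_add, norm_mul, norm_mul, norm_eq_abs (log _), norm_eq_abs (regLog _ _)]
  · filter_upwards [hne] with x hx
    exact (tendsto_regLog hx).mul_const (ψ x)

lemma lap_regLog (hε : ε ≠ 0) (x : E2) :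
    lap (regLog ε) x = 2 * ε ^ 2 / (‖x‖ ^ 2 + ε ^ 2) ^ 2 := by
  have hpos : ‖x‖ ^ 2 + ε ^ 2 ≠ 0 := by positivity
  have hnorm : ‖x‖ ^ 2 = x 0 ^ 2 + x 1 ^ 2 := by
    rw [EuclideanSpace.real_norm_sq_eq, Fin.sum_univ_two]
  simp only [lap, fderiv_fderiv_regLog_apply hε, Fin.sum_univ_two]
  simp only [PiLp.norm_single, norm_one, one_pow, EuclideanSpace.inner_single_right, ringHom_apply,
    one_mul]
  field_simp
  rw [hnorm]
  ring

end RegularisedLogarithm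

section FundamentalSolution

/-- The probability density `1 / (π (1 + ‖x‖²)²)` on the plane (the uniform distribution on the
sphere in stereographic coordinates); `Δ (regLog ε)` is `2π` times its rescaling by `ε`. -/
def stereographicDensity (x : E2) : ℝ :=
  π⁻¹ * ((1 + ‖x‖ ^ 2) ^ 2)⁻¹

lemma stereographicDensity_nonneg (x : E2) : 0 ≤ stereographicDensity x := by
  unfold stereographicDensity
  positivity

lemma integral_Ioi_mul_inv_one_add_sq_sq :
    ∫ r in Set.Ioi (0 : ℝ), r * ((1 + r ^ 2) ^ 2)⁻¹ = 1 / 2 := by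
  have hderiv (r : ℝ) : HasDerivAt (fun r : ℝ => -(1 / 2) * (1 + r ^ 2)⁻¹)
      (r * ((1 + r ^ 2) ^ 2)⁻¹) r := by
    have hpos : 1 + r ^ 2 ≠ 0 := by positivity
    refine (((hasDerivAt_pow 2 r).const_add 1).fun_inv hpos |>.const_mul (-(1 / 2))).congr_deriv ?_
    field_simp
    norm_num
  have htop : Tendsto (fun r : ℝ => -(1 / 2) * (1 + r ^ 2)⁻¹) atTop (𝓝 0) := by
    have := ((tendsto_atTop_add_const_left atTop (1 : ℝ)
      (tendsto_pow_atTop two_ne_zero)).inv_tendsto_atTop).const_mul (-(1 / 2) : ℝ)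
    simpa using this
  rw [integral_Ioi_of_hasDerivAt_of_nonneg' (fun r _ => hderiv r)
    (fun r (hr : 0 < r) => by positivity) htop]
  norm_num

lemma integral_stereographicDensity : ∫ x, stereographicDensity x = 1 := by
  have hball : volume.real (Metric.ball (0 : E2) 1) = π := by
    simp [Measure.real, EuclideanSpace.volume_ball_fin_two, pi_pos.le]
  have hpolar := integral_fun_norm_addHaar (E := E2) volume fun r => π⁻¹ * ((1 + r ^ 2) ^ 2)⁻¹
  simp only [finrank_euclideanSpace, Fintype.card_fin, hball, Nat.add_one_sub_one, pow_one,
    smul_eq_mul, mul_left_comm _ π⁻¹, integral_const_mul, integral_Ioi_mul_inv_one_add_sq_sq,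
    nsmul_eq_mul] at hpolar
  simp only [stereographicDensity, integral_const_mul]
  rw [hpolar]
  field_simp
  norm_num

lemma tendsto_norm_pow_mul_stereographicDensity :
    Tendsto (fun x : E2 => ‖x‖ ^ 2 * stereographicDensity x) (Bornology.cobounded E2) (𝓝 0) := by
  have hsq : Tendsto (fun x : E2 => 1 + ‖x‖ ^ 2) (Bornology.cobounded E2) atTop :=
    tendsto_atTop_add_const_left _ _
      ((tendsto_pow_atTop two_ne_zero).comp tendsto_norm_cobounded_atTop)
  have hinv : Tendsto (fun x : E2 => π⁻¹ * (1 + ‖x‖ ^ 2)⁻¹) (Bornology.cobounded E2) (𝓝 0) := by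
    simpa using hsq.inv_tendsto_atTop.const_mul π⁻¹
  refine squeeze_zero
    (fun x => mul_nonneg (sq_nonneg _) (stereographicDensity_nonneg x)) (fun x => ?_) hinv
  rw [stereographicDensity]
  field_simp
  linarith

lemma lap_regLog_eq_stereographicDensity {ε : ℝ} (hε : ε ≠ 0) (x : E2) :
    lap (regLog ε) x = 2 * π * (ε⁻¹ ^ 2 * stereographicDensity (ε⁻¹ • x)) := by
  rw [lap_regLog hε, stereographicDensity, norm_smul, mul_pow, norm_eq_abs, sq_abs, inv_pow]
  have : ‖x‖ ^ 2 + ε ^ 2 ≠ 0 := by positivity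
  field_simp
  ring

variable {ψ : E2 → ℝ}

lemma tendsto_integral_lap_regLog_mul (hψ : Continuous ψ) (hcψ : HasCompactSupport ψ) :
    Tendsto (fun ε => ∫ x, lap (regLog ε) x * ψ x) (𝓝[>] 0) (𝓝 (2 * π * ψ 0)) := by
  have hfinrank : Module.finrank ℝ E2 = 2 := finrank_euclideanSpace_fin
  have hpeak := tendsto_integral_comp_smul_smul_of_integrable stereographicDensity_nonneg
    integral_stereographicDensity
    (hfinrank.symm ▸ tendsto_norm_pow_mul_stereographicDensity)
    (hψ.integrable_of_hasCompactSupport hcψ) hψ.continuousAt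
  refine ((hpeak.comp tendsto_inv_nhdsGT_zero).const_mul (2 * π)).congr' ?_
  filter_upwards [self_mem_nhdsWithin] with ε hε
  simp only [lap_regLog_eq_stereographicDensity (Set.mem_Ioi.1 hε).ne', Function.comp_apply,
    hfinrank, smul_eq_mul, mul_assoc, integral_const_mul]

lemma integral_log_norm_mul_lap (hψ : ContDiff ℝ 2 ψ) (hcψ : HasCompactSupport ψ) :
    ∫ x, log ‖x‖ * lap ψ x = 2 * π * ψ 0 := by
  refine tendsto_nhds_unique
    (tendsto_integral_regLog_mul (continuous_lap hψ) (hasCompactSupport_lap hcψ)) ?_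
  refine (tendsto_integral_lap_regLog_mul hψ.continuous hcψ).congr' ?_
  filter_upwards [self_mem_nhdsWithin] with ε hε
  exact (integral_mul_lap (contDiff_regLog (Set.mem_Ioi.1 hε).ne') hψ hcψ).symm

theorem integral_log_norm_sub_mul_lap (hψ : ContDiff ℝ 2 ψ) (hcψ : HasCompactSupport ψ) (y : E2) :
    ∫ x, log ‖x - y‖ * lap ψ x = 2 * π * ψ y := by
  have htrans := integral_log_norm_mul_lap (ψ := fun x => ψ (x + y)) (by fun_prop)
    (hcψ.comp_homeomorph (Homeomorph.addRight y))
  simp only [lap_comp_add_right, zero_add] at htrans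
  rw [← htrans, ← integral_add_right_eq_self _ y]
  simp only [add_sub_cancel_right]

end FundamentalSolution

section PlanePotential

lemma integrable_posLog_norm_mul_of_log_two_add {E : Type*} [NormedAddCommGroup E]
    [MeasurableSpace E] [OpensMeasurableSpace E] {μ : Measure E} {f : E → ℝ}
    (hf : AEStronglyMeasurable f μ) (hlog : Integrable (fun y => |f y| * log (2 + ‖y‖)) μ) :
    Integrable (fun y => log⁺ ‖y‖ * f y) μ := by
  refine hlog.mono' (Continuous.aestronglyMeasurable (by fun_prop) |>.mul hf)
    (ae_of_all _ fun y => ?_)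
  rw [norm_mul, norm_of_nonneg posLog_nonneg, norm_eq_abs, mul_comm,
    posLog_eq_log_max_one (norm_nonneg y)]
  gcongr
  exact max_le (by linarith [norm_nonneg y]) (by linarith)

lemma integrable_of_integrable_mul_one_add_norm_rpow {E : Type*} [SeminormedAddCommGroup E]
    [MeasurableSpace E] {μ : Measure E} {g : E → ℝ} {s : ℝ} (hs : 0 ≤ s)
    (hg : AEStronglyMeasurable g μ) (hint : Integrable (fun x => g x * (1 + ‖x‖) ^ s) μ) :
    Integrable g μ := by
  refine hint.mono hg (ae_of_all _ fun x => ?_)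
  rw [norm_mul]
  refine le_mul_of_one_le_right (norm_nonneg _) ?_
  rw [norm_of_nonneg (by positivity)]
  exact one_le_rpow (le_add_of_nonneg_right (norm_nonneg x)) hs

lemma memLp_ofReal_of_integrable_abs_rpow {α : Type*} [MeasurableSpace α] {μ : Measure α}
    {f : α → ℝ} {p : ℝ} (hp : 0 < p) (hf : AEStronglyMeasurable f μ)
    (hint : Integrable (fun x => |f x| ^ p) μ) : MemLp f (ENNReal.ofReal p) μ := by
  rw [← integrable_norm_rpow_iff hf (ENNReal.ofReal_pos.2 hp).ne' ENNReal.ofReal_ne_top,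
    ENNReal.toReal_ofReal hp.le]
  exact hint

lemma integral_logPotential_mul_lap {f φ : E2 → ℝ} (hf : Integrable f)
    (hlog : Integrable fun y => log⁺ ‖y‖ * f y) (hφ : ContDiff ℝ 2 φ)
    (hcφ : HasCompactSupport φ) :
    ∫ x, logPotential volume f x * lap φ x = 2 * π * ∫ x, f x * φ x := by
  rw [integral_logPotential_mul hf hlog (continuous_lap hφ) (hasCompactSupport_lap hcφ),
    ← integral_const_mul]
  simp only [integral_log_norm_sub_mul_lap hφ hcφ, mul_left_comm (f _)]

theorem stmt7_general (f : E2 → ℝ) (hf : Integrable f)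
    (hlog : Integrable (fun y : E2 => |f y| * log (2 + ‖y‖))) (p : ℝ) (hp : 1 < p)
    (hloc : ∀ s : Set E2, IsCompact s → IntegrableOn (fun x => |f x| ^ p) s) :
    Continuous (fun x : E2 => -(1/(2*π)) * ∫ y : E2, log ‖x - y‖ * f y) ∧
    (∀ φ : E2 → ℝ, ContDiff ℝ 2 φ → HasCompactSupport φ →
      ∫ x : E2, (-(1/(2*π)) * ∫ y : E2, log ‖x - y‖ * f y) * lap φ x
        = - ∫ x : E2, f x * φ x) ∧
    (∫ y, f y = 0 → Integrable (fun x => |f x| ^ p) →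
      Tendsto (fun x : E2 => -(1/(2*π)) * ∫ y : E2, log ‖x - y‖ * f y)
        (cocompact E2) (nhds 0)) := by
  have hlog' := integrable_posLog_norm_mul_of_log_two_add hf.1 hlog
  have hp_one : 1 < ENNReal.ofReal p := ENNReal.one_lt_ofReal.2 hp
  have hp_pos : 0 < p := zero_lt_one.trans hp
  refine ⟨?_, fun φ hφ hcφ => ?_, fun hzero hint => ?_⟩
  · exact (continuous_logPotential hf hlog' hp_one fun s hs =>
      memLp_ofReal_of_integrable_abs_rpow hp_pos hf.1.restrict (hloc s hs)).const_mul _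
  · have hweak := integral_logPotential_mul_lap hf hlog' hφ hcφ
    simp only [logPotential] at hweak
    simp only [mul_assoc, integral_const_mul]
    rw [hweak]
    field_simp
  · rw [← mul_zero (-(1/(2*π)))]
    exact (tendsto_logPotential_cocompact hf hlog' hzero hp_one ENNReal.ofReal_ne_top
      (memLp_ofReal_of_integrable_abs_rpow hp_pos hf.1 hint)).const_mul _

end PlanePotential

theorem stmt7 (f : E2 → ℝ) (hmeas : Measurable f) (hf : Integrable f)
    (hlog : Integrable (fun y : E2 => |f y| * log (2 + ‖y‖)))
    (hzero : ∫ y, f y = 0) (p : ℝ) (hp : 1 < p)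
    (hloc : ∀ s : Set E2, IsCompact s → IntegrableOn (fun x => |f x| ^ p) s) :
    Continuous (fun x : E2 => -(1/(2*π)) * ∫ y : E2, log ‖x - y‖ * f y) ∧
    (∀ φ : E2 → ℝ, ContDiff ℝ (⊤ : ℕ∞) φ → HasCompactSupport φ →
      ∫ x : E2, (-(1/(2*π)) * ∫ y : E2, log ‖x - y‖ * f y) * lap φ x
        = - ∫ x : E2, f x * φ x) ∧
    (∀ β : ℝ, 0 < β →
      Integrable (fun x : E2 => |f x| ^ p * (1 + ‖x‖) ^ (2*β*p + 2*(p-1))) →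
      Tendsto (fun x : E2 => -(1/(2*π)) * ∫ y : E2, log ‖x - y‖ * f y)
        (cocompact E2) (nhds 0)) := by
  obtain ⟨hcont, hweak, hdecay⟩ := stmt7_general f hf hlog p hp hloc
  refine ⟨hcont, fun φ hφ => hweak φ (hφ.of_le (WithTop.coe_le_coe.2 le_top)), fun β hβ hint => ?_⟩
  exact hdecay hzero <| integrable_of_integrable_mul_one_add_norm_rpow
    (add_nonneg (by positivity) (by linarith))
    (hf.1.norm.aemeasurable.pow_const p).aestronglyMeasurable hint
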